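/- Let m, n ∈ ℕ, let λ > 0, and let A be a real m × n matrix. Equip the space of m × n real matrices with the Frobenius inner product ⟪A,B⟫ = ∑_{i,j} A_{ij} B_{ij}, and define the regularizer R(B) = λ ∑_{i=1}^{m} ‖B_{i,:}‖₂, where ‖B_{i,:}‖₂ = (∑_{j=1}^{n} B_{ij}²)^{1/2} is the Euclidean norm of the i-th row. Then the unique minimizer B* of B ↦ (1/2)‖A − B‖_F² + R(B) is given row-wise by: B*_{i,:} = 0 if ‖A_{i,:}‖₂ ≤ λ, and B*_{i,:} = (1 − λ/‖A_{i,:}‖₂)·A_{i,:} if ‖A_{i,:}‖₂ > λ. -/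

import Mathlib

open scoped BigOperators

/-!
A point `p` minimizes `y ↦ ½‖a - y‖² + f y` as soon as `a - p` is a subgradient of `f` at `p`: the
subgradient inequality, added to the expansion of `‖a - y‖²` around `p`, makes the objective at `y`
exceed the one at `p` by at least `½‖y - p‖²`, which also gives uniqueness. A vector `g` is a
subgradient of `lam‖·‖` at `p` when `‖g‖ ≤ lam` and `⟪g, p⟫ = lam‖p‖`, by Cauchy-Schwarz. Both
conditions hold for the residual `a - p` when `p` is the soft-thresholding of `a`: either `p = 0`
and `‖a‖ ≤ lam`, or the residual is a nonnegative multiple of `p` with norm `lam`. Finally,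
subgradients of a sum of functions of separate blocks can be taken block by block.
-/

open scoped RealInnerProductSpace

section Prox

variable {E : Type*} [SeminormedAddCommGroup E]

/-- The proximal operator of `f`, set-valued since minimizers need neither exist nor be unique for
general `f`. -/
def prox (f : E → ℝ) (a : E) : Set E :=
  {p | IsMinOn (fun y => (1 / 2 : ℝ) * ‖a - y‖ ^ 2 + f y) Set.univ p}

theorem mem_prox_iff {f : E → ℝ} {a p : E} :
    p ∈ prox f a ↔
      ∀ y, (1 / 2 : ℝ) * ‖a - p‖ ^ 2 + f p ≤ (1 / 2 : ℝ) * ‖a - y‖ ^ 2 + f y := by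
  simp only [prox, Set.mem_ofPred_eq, isMinOn_univ_iff]

end Prox

section SoftThreshold

variable {E : Type*} [SeminormedAddCommGroup E] [NormedSpace ℝ E]

/-- Block soft-thresholding: for `0 ≤ lam`, shrinks `a` towards the origin by the length `lam`,
stopping at the origin. It is the proximal operator of `lam‖·‖`. -/
noncomputable def softThreshold (lam : ℝ) (a : E) : E :=
  if ‖a‖ ≤ lam then 0 else (1 - lam / ‖a‖) • a

variable {a : E} {lam : ℝ}

theorem softThreshold_of_norm_le (h : ‖a‖ ≤ lam) : softThreshold lam a = 0 :=
  if_pos h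

theorem softThreshold_of_lt_norm (h : lam < ‖a‖) :
    softThreshold lam a = (1 - lam / ‖a‖) • a :=
  if_neg h.not_ge

theorem sub_softThreshold_of_lt_norm (h : lam < ‖a‖) :
    a - softThreshold lam a = (lam / ‖a‖) • a := by
  rw [softThreshold_of_lt_norm h]
  module

theorem norm_softThreshold_of_lt_norm (hlam : 0 ≤ lam) (h : lam < ‖a‖) :
    ‖softThreshold lam a‖ = ‖a‖ - lam := by
  have ha : 0 < ‖a‖ := hlam.trans_lt h
  have hcoeff : 0 ≤ 1 - lam / ‖a‖ := sub_nonneg.mpr <| (div_le_one ha).mpr h.le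
  rw [softThreshold_of_lt_norm h, norm_smul_of_nonneg hcoeff]
  field_simp

theorem norm_sub_softThreshold_le (hlam : 0 ≤ lam) (a : E) :
    ‖a - softThreshold lam a‖ ≤ lam := by
  obtain h | h := le_or_gt ‖a‖ lam
  · rwa [softThreshold_of_norm_le h, sub_zero]
  · have ha : 0 < ‖a‖ := hlam.trans_lt h
    rw [sub_softThreshold_of_lt_norm h, norm_smul_of_nonneg (by positivity),
      div_mul_cancel₀ lam ha.ne']

end SoftThreshold

section Subgradient

variable {E : Type*} [SeminormedAddCommGroup E] [InnerProductSpace ℝ E]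

/-- `g` is a subgradient of `f` at `p`, that is, `g` belongs to the subdifferential `∂f(p)`; it is
used to certify minimizers of the proximal objective. -/
def HasSubgradientAt (f : E → ℝ) (g p : E) : Prop :=
  ∀ y, f p + ⟪g, y - p⟫ ≤ f y

variable {f : E → ℝ} {a g p : E} {lam : ℝ}

theorem HasSubgradientAt.prox_quadratic_growth (h : HasSubgradientAt f (a - p) p) (y : E) :
    (1 / 2 : ℝ) * ‖a - p‖ ^ 2 + f p + (1 / 2 : ℝ) * ‖y - p‖ ^ 2 ≤
      (1 / 2 : ℝ) * ‖a - y‖ ^ 2 + f y := by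
  have expansion : ‖a - y‖ ^ 2 = ‖a - p‖ ^ 2 - 2 * ⟪a - p, y - p⟫ + ‖y - p‖ ^ 2 := by
    rw [← norm_sub_sq_real, sub_sub_sub_cancel_right]
  linarith [h y]

theorem HasSubgradientAt.prox_eq_singleton {E : Type*} [NormedAddCommGroup E]
    [InnerProductSpace ℝ E] {f : E → ℝ} {a p : E} (h : HasSubgradientAt f (a - p) p) :
    prox f a = {p} := by
  refine Set.eq_singleton_iff_unique_mem.mpr ⟨mem_prox_iff.mpr fun y => ?_, fun y hy => ?_⟩
  · linarith [h.prox_quadratic_growth y, sq_nonneg ‖y - p‖]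
  · have hle := mem_prox_iff.mp hy p
    have hsq : ‖y - p‖ ^ 2 ≤ 0 := by linarith [h.prox_quadratic_growth y]
    exact sub_eq_zero.mp <| norm_eq_zero.mp <| (sq_nonpos_iff _).mp hsq

theorem hasSubgradientAt_const_mul_norm (hg : ‖g‖ ≤ lam) (hgp : ⟪g, p⟫ = lam * ‖p‖) :
    HasSubgradientAt (fun y => lam * ‖y‖) g p := fun y =>
  calc
    lam * ‖p‖ + ⟪g, y - p⟫ = ⟪g, y⟫ := by rw [inner_sub_right, hgp, add_sub_cancel]
    _ ≤ ‖g‖ * ‖y‖ := real_inner_le_norm g y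
    _ ≤ lam * ‖y‖ := by gcongr

theorem inner_sub_softThreshold_self (hlam : 0 ≤ lam) (a : E) :
    ⟪a - softThreshold lam a, softThreshold lam a⟫ = lam * ‖softThreshold lam a‖ := by
  obtain h | h := le_or_gt ‖a‖ lam
  · simp [softThreshold_of_norm_le h]
  · have ha : 0 < ‖a‖ := hlam.trans_lt h
    rw [norm_softThreshold_of_lt_norm hlam h, sub_softThreshold_of_lt_norm h,
      softThreshold_of_lt_norm h, real_inner_smul_left, real_inner_smul_right,
      real_inner_self_eq_norm_sq]
    field_simp

theorem hasSubgradientAt_softThreshold (hlam : 0 ≤ lam) (a : E) :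
    HasSubgradientAt (fun y => lam * ‖y‖) (a - softThreshold lam a) (softThreshold lam a) :=
  hasSubgradientAt_const_mul_norm (norm_sub_softThreshold_le hlam a)
    (inner_sub_softThreshold_self hlam a)

end Subgradient

section PiLp

variable {ι : Type*} [Fintype ι] {E : ι → Type*} [∀ i, NormedAddCommGroup (E i)]
  [∀ i, InnerProductSpace ℝ (E i)]

theorem HasSubgradientAt.piLp_sum {f : ∀ i, E i → ℝ} {g p : PiLp 2 E}
    (h : ∀ i, HasSubgradientAt (f i) (g i) (p i)) :
    HasSubgradientAt (fun y : PiLp 2 E => ∑ i, f i (y i)) g p := fun y => by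
  rw [PiLp.inner_apply, ← Finset.sum_add_distrib]
  exact Finset.sum_le_sum fun i _ => h i (y i)

theorem prox_l12_rowSoftThreshold_general {lam : ι → ℝ} (hlam : ∀ i, 0 ≤ lam i) (A : PiLp 2 E) :
    prox (fun B : PiLp 2 E => ∑ i, lam i * ‖B i‖) A =
      {WithLp.toLp 2 fun i => softThreshold (lam i) (A i)} :=
  (HasSubgradientAt.piLp_sum (f := fun i y => lam i * ‖y‖) fun i =>
    hasSubgradientAt_softThreshold (hlam i) (A i)).prox_eq_singleton

end PiLp

section Matrix

variable {ι κ : Type*}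

/-- A real matrix as the family of its rows. The nested `L²` norm on the right is the Frobenius
norm, which the type `Matrix` does not carry by default. -/
def matrixRowsEquiv : Matrix ι κ ℝ ≃ PiLp 2 fun _ : ι => EuclideanSpace ℝ κ where
  toFun A := WithLp.toLp 2 fun i => WithLp.toLp 2 (A i)
  invFun B := Matrix.of fun i j => B i j

theorem matrixRowsEquiv_apply (A : Matrix ι κ ℝ) (i : ι) (j : κ) :
    matrixRowsEquiv A i j = A i j :=
  rfl

variable [Fintype κ]

theorem norm_matrixRowsEquiv_apply (A : Matrix ι κ ℝ) (i : ι) :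
    ‖matrixRowsEquiv A i‖ = Real.sqrt (∑ j, (A i j) ^ 2) := by
  simp [matrixRowsEquiv_apply, EuclideanSpace.norm_eq]

theorem norm_matrixRowsEquiv_sub_sq [Fintype ι] (A B : Matrix ι κ ℝ) :
    ‖matrixRowsEquiv A - matrixRowsEquiv B‖ ^ 2 = ∑ i, ∑ j, (A i j - B i j) ^ 2 := by
  simp [matrixRowsEquiv_apply, PiLp.norm_sq_eq_of_L2]

theorem matrixRowsEquiv_mem_prox_iff [Fintype ι] (lam : ℝ) (A B : Matrix ι κ ℝ) :
    matrixRowsEquiv B ∈ prox (fun C => ∑ i, lam * ‖C i‖) (matrixRowsEquiv A) ↔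
      IsMinOn
        (fun B : Matrix ι κ ℝ =>
          (1 / 2 : ℝ) * (∑ i, ∑ j, (A i j - B i j) ^ 2) +
            lam * ∑ i, Real.sqrt (∑ j, (B i j) ^ 2))
        Set.univ B := by
  simp only [mem_prox_iff, isMinOn_univ_iff, matrixRowsEquiv.surjective.forall,
    norm_matrixRowsEquiv_sub_sq, norm_matrixRowsEquiv_apply, Finset.mul_sum]

theorem matrixRowsEquiv_rowSoftThreshold (lam : ℝ) (A : Matrix ι κ ℝ) :
    matrixRowsEquiv (Matrix.of fun i j =>
        if Real.sqrt (∑ j', (A i j') ^ 2) ≤ lam then (0 : ℝ)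
        else (1 - lam / Real.sqrt (∑ j', (A i j') ^ 2)) * A i j) =
      WithLp.toLp 2 fun i => softThreshold lam (matrixRowsEquiv A i) := by
  ext i j
  simp only [matrixRowsEquiv_apply, Matrix.of_apply, softThreshold, norm_matrixRowsEquiv_apply]
  split_ifs <;> simp [matrixRowsEquiv_apply]

end Matrix

/-- Row-wise soft-thresholding: the proximal operator of `λ` times the `ℓ^{1,2}` matrix
norm (sum of Euclidean norms of the rows), with respect to the Frobenius norm, acts on
each row of `A` by block soft-thresholding, and yields the unique minimizer. -/
theorem prox_l12_rowSoftThreshold {m n : ℕ} (lam : ℝ) (hlam : 0 < lam)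
    (A : Matrix (Fin m) (Fin n) ℝ) :
    IsMinOn
        (fun B : Matrix (Fin m) (Fin n) ℝ =>
          (1/2 : ℝ) * (∑ i, ∑ j, (A i j - B i j)^2) +
            lam * ∑ i, Real.sqrt (∑ j, (B i j)^2))
        Set.univ
        (Matrix.of fun i j =>
          if Real.sqrt (∑ j', (A i j')^2) ≤ lam then (0 : ℝ)
          else (1 - lam / Real.sqrt (∑ j', (A i j')^2)) * A i j) ∧
      ∀ B : Matrix (Fin m) (Fin n) ℝ,
        IsMinOn
          (fun B : Matrix (Fin m) (Fin n) ℝ =>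
            (1/2 : ℝ) * (∑ i, ∑ j, (A i j - B i j)^2) +
              lam * ∑ i, Real.sqrt (∑ j, (B i j)^2))
          Set.univ B →
        B = (Matrix.of fun i j =>
          if Real.sqrt (∑ j', (A i j')^2) ≤ lam then (0 : ℝ)
          else (1 - lam / Real.sqrt (∑ j', (A i j')^2)) * A i j) := by
  simp only [← matrixRowsEquiv_mem_prox_iff, ← matrixRowsEquiv.injective.eq_iff,
    matrixRowsEquiv_rowSoftThreshold, prox_l12_rowSoftThreshold_general fun _ => hlam.le,
    Set.mem_singleton_iff, imp_self, implies_true, and_self]
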